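/- arXiv:2302.07400 — 2 statements merged into one kernel-verified Lean document; each statement's English description precedes it below -/
import Mathlib

section
/- Let H be a real separable Hilbert space, ν = N(0,C) a centered Gaussian measure with C self-adjoint, positive, trace-class, and μ a probability measure on H with μ(C^{1/2}(H)) = 1. Then the convolution ν * μ is equivalent (mutually absolutely continuous) to ν. -/
open MeasureTheory ProbabilityTheory
open scoped ENNReal InnerProductSpace MeasureTheory

/-- `ν` is a centered Gaussian measure on the Hilbert space `H` with covariance operator `C`:
every one-dimensional projection is a centered real Gaussian with the corresponding variance. -/
def IsCenteredGaussian {H : Type*} [NormedAddCommGroup H] [InnerProductSpace ℝ H]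
    [MeasurableSpace H] (ν : Measure H) (C : H →L[ℝ] H) : Prop :=
  IsProbabilityMeasure ν ∧
    ∀ v : H, ν.map (fun x => ⟪v, x⟫_ℝ) = gaussianReal 0 (⟪C v, v⟫_ℝ).toNNReal

/-- A bounded operator on a Hilbert space is trace-class if the sum of its diagonal elements
converges in any Hilbert basis. -/
def IsTraceClass {H : Type*} [NormedAddCommGroup H] [InnerProductSpace ℝ H]
    (C : H →L[ℝ] H) : Prop :=
  ∀ b : HilbertBasis ℕ ℝ H, Summable fun i => ⟪C (b i), b i⟫_ℝ

/-!
For `h` in the Cameron–Martin space of a Gaussian measure `γ`, the functional `L ↦ L h` is bounded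
by a multiple of the `L²(γ)` norm of `L - γ[L]`, so by Riesz it is represented by some `F` in the
`L²(γ)`-closure of the centered continuous functionals. That closure consists of centered Gaussian
variables, and completing the square in moment generating functions shows that tilting `γ` by `F`
moves the mean of each `L` by `⟪F, L - γ[L]⟫ = L h`. Hence the translate of `γ` by `h` is
`γ.tilted F`, which is equivalent to `γ`. The convolution `γ ∗ μ` is the `μ`-mixture of these
translates.
-/

open Filter
open scoped Topology

section RieszRepresentation

variable {𝕜 V G : Type*} [RCLike 𝕜] [AddCommGroup V] [Module 𝕜 V]
  [NormedAddCommGroup G] [InnerProductSpace 𝕜 G] [CompleteSpace G]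

theorem exists_mem_topologicalClosure_range_inner_eq {X : V →ₗ[𝕜] G} {ℓ : V →ₗ[𝕜] 𝕜} {c : ℝ}
    (hℓ : ∀ v, ‖ℓ v‖ ≤ c * ‖X v‖) :
    ∃ F ∈ X.range.topologicalClosure, ∀ v, ⟪F, X v⟫_𝕜 = ℓ v := by
  let K := X.range.topologicalClosure
  have : CompleteSpace K := X.range.isClosed_topologicalClosure.completeSpace_coe
  let Y : V →ₗ[𝕜] K := X.codRestrict K fun v ↦ X.range.le_topologicalClosure ⟨v, rfl⟩
  have hY : DenseRange Y := by
    rw [DenseRange, Subtype.dense_iff, ← Set.range_comp]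
    exact subset_rfl
  refine ⟨(InnerProductSpace.toDual 𝕜 K).symm (ℓ.extendOfNorm Y), Subtype.coe_prop _, fun v ↦ ?_⟩
  calc
    _ = ⟪(InnerProductSpace.toDual 𝕜 K).symm (ℓ.extendOfNorm Y), Y v⟫_𝕜 := rfl
    _ = ℓ v := by
      rw [InnerProductSpace.toDual_symm_apply, LinearMap.extendOfNorm_eq hY ⟨c, hℓ⟩]

end RieszRepresentation

section Convolution

variable {M : Type*} [AddMonoid M] [MeasurableSpace M] [MeasurableAdd₂ M] {μ ν ρ : Measure M}
  [SFinite μ] [SFinite ν]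

theorem conv_apply_eq_lintegral_map_add_right {s : Set M} (hs : MeasurableSet s) :
    (ν ∗ μ) s = ∫⁻ h, ν.map (· + h) s ∂μ := by
  rw [Measure.conv, Measure.map_apply measurable_add hs,
    Measure.prod_apply_symm (measurable_add hs)]
  refine lintegral_congr fun h ↦ ?_
  rw [Measure.map_apply (by fun_prop) hs]
  rfl

theorem conv_absolutelyContinuous_of_ae_map_add_right (h : ∀ᵐ x ∂μ, ν.map (· + x) ≪ ρ) :
    ν ∗ μ ≪ ρ := by
  refine Measure.AbsolutelyContinuous.mk fun s hs hρs ↦ ?_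
  rw [conv_apply_eq_lintegral_map_add_right hs, lintegral_eq_zero_of_ae_eq_zero]
  filter_upwards [h] with x hx using hx hρs

theorem absolutelyContinuous_conv_of_frequently_map_add_right
    (h : ∃ᵐ x ∂μ, ρ ≪ ν.map (· + x)) : ρ ≪ ν ∗ μ := by
  refine Measure.AbsolutelyContinuous.mk fun s hs hνμs ↦ ?_
  have hmeas : Measurable fun x ↦ ν.map (· + x) s := by
    simpa only [Measure.map_apply (measurable_add_const _) hs] using!
      measurable_measure_prodMk_right (measurable_add hs)
  rw [conv_apply_eq_lintegral_map_add_right hs, lintegral_eq_zero_iff hmeas] at hνμs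
  obtain ⟨x, hx, hxs⟩ := (h.and_eventually hνμs).exists
  exact hx hxs

end Convolution

section GaussianSubspace

theorem map_eq_map_of_mgf_eq {Ω Ω' : Type*} [MeasurableSpace Ω] [MeasurableSpace Ω']
    {P : Measure Ω} {P' : Measure Ω'} [IsFiniteMeasure P] [IsProbabilityMeasure P']
    {X : Ω → ℝ} {Y : Ω' → ℝ} (hX : AEMeasurable X P) (hY : AEMeasurable Y P')
    (hint : ∀ t, Integrable (fun ω ↦ Real.exp (t * Y ω)) P') (h : mgf X P = mgf Y P') :
    P.map X = P'.map Y := by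
  have huniv : integrableExpSet Y P' = Set.univ := Set.eq_univ_of_forall hint
  refine Measure.ext_of_complexMGF_eq hX hY (funext fun z ↦ ?_)
  exact (eqOn_complexMGF_of_mgf h.symm (by simp [huniv])).symm

variable {Ω : Type*} [MeasurableSpace Ω] {P : Measure Ω}

theorem tendsto_charFun_map_of_tendsto_Lp {E : Type*} [NormedAddCommGroup E]
    [InnerProductSpace ℝ E] [FiniteDimensional ℝ E] [MeasurableSpace E] [BorelSpace E]
    [IsProbabilityMeasure P] {p : ℝ≥0∞} [Fact (1 ≤ p)] {F : ℕ → Lp E p P} {G : Lp E p P}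
    (hF : Tendsto F atTop (𝓝 G)) (t : E) :
    Tendsto (fun n ↦ charFun (P.map (F n)) t) atTop (𝓝 (charFun (P.map G) t)) :=
  ProbabilityMeasure.tendsto_iff_tendsto_charFun.1
    ((tendstoInMeasure_of_tendsto_Lp hF).tendstoInDistribution
      fun n ↦ (Lp.aestronglyMeasurable (F n)).aemeasurable).tendsto t

theorem isClosed_setOf_hasLaw_gaussianReal [IsProbabilityMeasure P] :
    IsClosed {F : Lp ℝ 2 P | HasLaw F (gaussianReal 0 (‖F‖₊ ^ 2)) P} := by
  refine IsSeqClosed.isClosed fun F G (hF : ∀ n, HasLaw _ _ _) hFG ↦ ?_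
  have hG : AEMeasurable G P := (Lp.aestronglyMeasurable G).aemeasurable
  have : IsProbabilityMeasure (P.map G) := Measure.isProbabilityMeasure_map hG
  refine ⟨hG, Measure.ext_of_charFun (funext fun t ↦ ?_)⟩
  refine tendsto_nhds_unique (tendsto_charFun_map_of_tendsto_Lp hFG t) ?_
  simp only [(hF _).map_eq, charFun_gaussianReal, NNReal.coe_pow, coe_nnnorm]
  have hcont : Continuous fun K : Lp ℝ 2 P ↦
      Complex.exp (t * (0 : ℝ) * Complex.I - (‖K‖ ^ 2 : ℝ) * t ^ 2 / 2) := by fun_prop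
  exact (hcont.tendsto G).comp hFG

/-- A linear subspace of `L²(P)` is Gaussian if it consists of centered Gaussian random variables.
The variance of such a variable is its squared norm. -/
def IsGaussianSubspace (K : Submodule ℝ (Lp ℝ 2 P)) : Prop :=
  ∀ F ∈ K, HasLaw F (gaussianReal 0 (‖F‖₊ ^ 2)) P

namespace IsGaussianSubspace

variable {K : Submodule ℝ (Lp ℝ 2 P)} {F G : Lp ℝ 2 P}

theorem topologicalClosure [IsProbabilityMeasure P] (hK : IsGaussianSubspace K) :
    IsGaussianSubspace K.topologicalClosure :=
  fun _ hF ↦ closure_minimal hK isClosed_setOf_hasLaw_gaussianReal hF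

theorem integral_exp (hK : IsGaussianSubspace K) (hF : F ∈ K) :
    ∫ ω, Real.exp (F ω) ∂P = Real.exp (‖F‖ ^ 2 / 2) := by
  simpa [mgf] using mgf_gaussianReal (hK F hF).map_eq 1

theorem integrable_exp (hK : IsGaussianSubspace K) (hF : F ∈ K) :
    Integrable (fun ω ↦ Real.exp (F ω)) P :=
  not_imp_comm.1 integral_undef (by rw [hK.integral_exp hF]; positivity)

theorem mgf_tilted (hK : IsGaussianSubspace K) (hF : F ∈ K) (hG : G ∈ K) (t : ℝ) :
    mgf G (P.tilted F) t = Real.exp (⟪F, G⟫_ℝ * t + ‖G‖ ^ 2 * t ^ 2 / 2) := by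
  have hsum : (fun ω ↦ Real.exp ((⇑F + fun ω ↦ t * G ω) ω))
      =ᵐ[P] fun ω ↦ Real.exp ((F + t • G) ω) := by
    filter_upwards [Lp.coeFn_add F (t • G), Lp.coeFn_smul t G] with ω hadd hsmul
    rw [hadd, Pi.add_apply, Pi.add_apply, hsmul, Pi.smul_apply, smul_eq_mul]
  rw [mgf, integral_exp_tilted, integral_congr_ae hsum, hK.integral_exp hF,
    hK.integral_exp (K.add_mem hF (K.smul_mem t hG)), ← Real.exp_sub, norm_add_sq_real,
    inner_smul_right, norm_smul, mul_pow, Real.norm_eq_abs, sq_abs]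
  congr 1
  ring

theorem hasLaw_tilted [NeZero P] (hK : IsGaussianSubspace K) (hF : F ∈ K) (hG : G ∈ K) :
    HasLaw G (gaussianReal ⟪F, G⟫_ℝ (‖G‖₊ ^ 2)) (P.tilted F) := by
  have := isProbabilityMeasure_tilted (hK.integrable_exp hF)
  have hG' : AEMeasurable G (P.tilted F) :=
    (Lp.stronglyMeasurable G).measurable.aemeasurable
  refine ⟨hG', ?_⟩
  rw [map_eq_map_of_mgf_eq hG' aemeasurable_id integrable_exp_mul_gaussianReal, Measure.map_id]
  ext t
  rw [hK.mgf_tilted hF hG, mgf_id_gaussianReal, NNReal.coe_pow, coe_nnnorm]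

end IsGaussianSubspace

end GaussianSubspace

section CameronMartin

variable {E : Type*} [NormedAddCommGroup E] [NormedSpace ℝ E] [MeasurableSpace E] {γ : Measure E}

/-- The Cameron–Martin space of a measure `γ`: the vectors `h` whose evaluation functional
`L ↦ L h` on the dual is bounded for the covariance seminorm `L ↦ √Var[L; γ]`. -/
def cameronMartinSpace (γ : Measure E) : Submodule ℝ E where
  carrier := {h | ∃ c, ∀ L : StrongDual ℝ E, |L h| ≤ c * √Var[L; γ]}
  zero_mem' := ⟨0, by simp⟩
  add_mem' := by
    rintro x y ⟨c, hc⟩ ⟨d, hd⟩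
    refine ⟨c + d, fun L ↦ ?_⟩
    rw [map_add, add_mul]
    exact (abs_add_le _ _).trans (add_le_add (hc L) (hd L))
  smul_mem' := by
    rintro a x ⟨c, hc⟩
    refine ⟨|a| * c, fun L ↦ ?_⟩
    rw [map_smul, smul_eq_mul, abs_mul, mul_assoc]
    exact mul_le_mul_of_nonneg_left (hc L) (abs_nonneg a)

theorem mem_cameronMartinSpace {h : E} :
    h ∈ cameronMartinSpace γ ↔ ∃ c, ∀ L : StrongDual ℝ E, |L h| ≤ c * √Var[L; γ] :=
  Iff.rfl

theorem measurableSet_cameronMartinSpace [OpensMeasurableSpace E] :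
    MeasurableSet (cameronMartinSpace γ : Set E) := by
  have hunion : (cameronMartinSpace γ : Set E) =
      ⋃ n : ℕ, ⋂ L : StrongDual ℝ E, {h | |L h| ≤ n * √Var[L; γ]} := by
    ext h
    simp only [SetLike.mem_coe, mem_cameronMartinSpace, Set.mem_iUnion, Set.mem_iInter,
      Set.mem_ofPred_eq]
    refine ⟨fun ⟨c, hc⟩ ↦ ?_, fun ⟨n, hn⟩ ↦ ⟨n, hn⟩⟩
    obtain ⟨n, hn⟩ := exists_nat_ge c
    exact ⟨n, fun L ↦ (hc L).trans (by gcongr)⟩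
  rw [hunion]
  exact .iUnion fun n ↦ (isClosed_iInter fun L ↦
    isClosed_le (by fun_prop) continuous_const).measurableSet

variable [BorelSpace E]

/-- The map sending a continuous linear functional `L` to the class of `L - γ[L]` in `L²(γ)`. -/
noncomputable def centeredDualToLp (γ : Measure E) [IsFiniteMeasure γ] :
    StrongDual ℝ E →L[ℝ] Lp ℝ 2 γ :=
  StrongDual.toLp γ 2 - Lp.constL 2 γ ℝ ∘L ContinuousLinearMap.apply ℝ ℝ (∫ x, x ∂γ)

variable [CompleteSpace E]

theorem coeFn_centeredDualToLp [IsFiniteMeasure γ] (hγ : MemLp id 2 γ) (L : StrongDual ℝ E) :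
    centeredDualToLp γ L =ᵐ[γ] fun x ↦ L x - γ[L] := by
  have hmean : γ[L] = L (∫ x, x ∂γ) := L.integral_comp_comm (hγ.integrable one_le_two)
  have htoLp : StrongDual.toLp γ 2 L =ᵐ[γ] L := by
    rw [StrongDual.toLp_apply hγ]
    exact MemLp.coeFn_toLp _
  filter_upwards [Lp.coeFn_sub (StrongDual.toLp γ 2 L) (Lp.const 2 γ (L (∫ x, x ∂γ))), htoLp,
    Lp.coeFn_const (p := 2) (μ := γ) (L (∫ x, x ∂γ))] with x hsub hL hconst
  rw [hmean]
  refine hsub.trans ?_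
  rw [Pi.sub_apply, hL, hconst, Function.const_apply]

theorem norm_centeredDualToLp_sq [IsFiniteMeasure γ] (hγ : MemLp id 2 γ) (L : StrongDual ℝ E) :
    ‖centeredDualToLp γ L‖ ^ 2 = Var[L; γ] := by
  rw [← real_inner_self_eq_norm_sq, L2.inner_def, variance_eq_integral (by fun_prop)]
  refine integral_congr_ae ?_
  filter_upwards [coeFn_centeredDualToLp hγ L] with x hx
  rw [hx, real_inner_self_eq_norm_sq, Real.norm_eq_abs, sq_abs]

theorem exists_inner_centeredDualToLp_eq [IsFiniteMeasure γ] (hγ : MemLp id 2 γ) {h : E}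
    (hh : h ∈ cameronMartinSpace γ) :
    ∃ F ∈ (centeredDualToLp γ).range.topologicalClosure,
      ∀ L, ⟪F, centeredDualToLp γ L⟫_ℝ = L h := by
  obtain ⟨c, hc⟩ := hh
  refine exists_mem_topologicalClosure_range_inner_eq (c := c)
    (X := (centeredDualToLp γ).toLinearMap)
    (ℓ := (ContinuousLinearMap.apply ℝ ℝ h).toLinearMap) fun L ↦ ?_
  have hL := hc L
  rwa [← norm_centeredDualToLp_sq hγ, Real.sqrt_sq (norm_nonneg _)] at hL

variable [SecondCountableTopology E] [IsGaussian γ]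

theorem nnnorm_centeredDualToLp_sq (L : StrongDual ℝ E) :
    ‖centeredDualToLp γ L‖₊ ^ 2 = Var[L; γ].toNNReal := by
  rw [← norm_centeredDualToLp_sq IsGaussian.memLp_two_id, Real.toNNReal_pow (norm_nonneg _),
    norm_toNNReal]

theorem hasLaw_dual (L : StrongDual ℝ E) :
    HasLaw L (gaussianReal γ[L] (‖centeredDualToLp γ L‖₊ ^ 2)) γ :=
  ⟨by fun_prop, by rw [IsGaussian.map_eq_gaussianReal, nnnorm_centeredDualToLp_sq]⟩

theorem isGaussianSubspace_range_centeredDualToLp :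
    IsGaussianSubspace (centeredDualToLp γ).range := by
  rintro _ ⟨L, rfl⟩
  have hsub := gaussianReal_sub_const (hasLaw_dual (γ := γ) L) γ[L]
  rw [sub_self] at hsub
  exact hsub.congr (coeFn_centeredDualToLp IsGaussian.memLp_two_id L)

theorem hasLaw_dual_map_add_right (L : StrongDual ℝ E) (h : E) :
    HasLaw L (gaussianReal (γ[L] + L h) (‖centeredDualToLp γ L‖₊ ^ 2)) (γ.map (· + h)) := by
  refine ⟨by fun_prop, ?_⟩
  rw [Measure.map_map (by fun_prop) (by fun_prop),
    ← (gaussianReal_add_const (hasLaw_dual L) (L h)).map_eq]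
  exact congrArg γ.map (funext fun x ↦ map_add L x h)

theorem hasLaw_dual_tilted {F : Lp ℝ 2 γ}
    (hF : F ∈ (centeredDualToLp γ).range.topologicalClosure) (L : StrongDual ℝ E) :
    HasLaw L (gaussianReal (γ[L] + ⟪F, centeredDualToLp γ L⟫_ℝ) (‖centeredDualToLp γ L‖₊ ^ 2))
      (γ.tilted F) := by
  have hcentered : HasLaw (centeredDualToLp γ L)
      (gaussianReal ⟪F, centeredDualToLp γ L⟫_ℝ (‖centeredDualToLp γ L‖₊ ^ 2)) (γ.tilted F) :=
    isGaussianSubspace_range_centeredDualToLp.topologicalClosure.hasLaw_tilted hF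
      (Submodule.le_topologicalClosure _ ⟨L, rfl⟩)
  rw [add_comm]
  refine (gaussianReal_const_add hcentered γ[L]).congr ?_
  filter_upwards [(tilted_absolutelyContinuous γ F).ae_le
    (coeFn_centeredDualToLp IsGaussian.memLp_two_id L)] with x hx
  rw [hx, add_sub_cancel]

theorem tilted_eq_map_add_right {F : Lp ℝ 2 γ} {h : E}
    (hF : F ∈ (centeredDualToLp γ).range.topologicalClosure)
    (hFh : ∀ L, ⟪F, centeredDualToLp γ L⟫_ℝ = L h) :
    γ.tilted F = γ.map (· + h) := by
  have := isProbabilityMeasure_tilted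
    (isGaussianSubspace_range_centeredDualToLp.topologicalClosure.integrable_exp hF)
  have := Measure.isFiniteMeasure_map γ (· + h)
  refine Measure.ext_of_charFunDual (funext fun L ↦ ?_)
  rw [charFunDual_eq_charFun_map_one, charFunDual_eq_charFun_map_one,
    (hasLaw_dual_tilted hF L).map_eq, (hasLaw_dual_map_add_right L h).map_eq, hFh]

theorem absolutelyContinuous_map_add_right_of_mem_cameronMartinSpace {h : E}
    (hh : h ∈ cameronMartinSpace γ) :
    γ.map (· + h) ≪ γ ∧ γ ≪ γ.map (· + h) := by
  obtain ⟨F, hF, hFh⟩ := exists_inner_centeredDualToLp_eq IsGaussian.memLp_two_id hh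
  rw [← tilted_eq_map_add_right hF hFh]
  exact ⟨tilted_absolutelyContinuous γ F, absolutelyContinuous_tilted
    (isGaussianSubspace_range_centeredDualToLp.topologicalClosure.integrable_exp hF)⟩

theorem stmt_0_general {μ : Measure E} [SFinite μ] [NeZero μ]
    (hμ : ∀ᵐ h ∂μ, h ∈ cameronMartinSpace γ) :
    (γ ∗ μ) ≪ γ ∧ γ ≪ (γ ∗ μ) := by
  have hequiv : ∀ᵐ h ∂μ, γ.map (· + h) ≪ γ ∧ γ ≪ γ.map (· + h) :=
    hμ.mono fun _ ↦ absolutelyContinuous_map_add_right_of_mem_cameronMartinSpace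
  exact ⟨conv_absolutelyContinuous_of_ae_map_add_right (hequiv.mono fun _ ↦ And.left),
    absolutelyContinuous_conv_of_frequently_map_add_right
      (hequiv.mono fun _ ↦ And.right).frequently⟩

end CameronMartin

namespace IsCenteredGaussian

variable {H : Type*} [NormedAddCommGroup H] [InnerProductSpace ℝ H]
  [MeasurableSpace H] [BorelSpace H] {C : H →L[ℝ] H} {ν : Measure H}

theorem variance_inner (hν : IsCenteredGaussian ν C) (v : H) :
    Var[fun x ↦ ⟪v, x⟫_ℝ; ν] = (⟪C v, v⟫_ℝ).toNNReal := by
  rw [← variance_id_map (by fun_prop), hν.2 v, variance_id_gaussianReal]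

variable [CompleteSpace H]

theorem isGaussian (hν : IsCenteredGaussian ν C) : IsGaussian ν := by
  refine isGaussian_of_map_eq_gaussianReal fun L ↦ ?_
  obtain ⟨v, rfl⟩ := (InnerProductSpace.toDual ℝ H).surjective L
  exact ⟨_, _, hν.2 v⟩

variable {G : Type*} [NormedAddCommGroup G] [InnerProductSpace ℝ G] [CompleteSpace G]
  {S : G →L[ℝ] H}

theorem sqrt_variance_inner (hν : IsCenteredGaussian ν (S ∘L S.adjoint)) (v : H) :
    √Var[fun x ↦ ⟪v, x⟫_ℝ; ν] = ‖S.adjoint v‖ := by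
  rw [hν.variance_inner, ContinuousLinearMap.comp_apply, ← S.adjoint_inner_right,
    real_inner_self_eq_norm_sq, Real.coe_toNNReal _ (sq_nonneg _), Real.sqrt_sq (norm_nonneg _)]

theorem range_subset_cameronMartinSpace (hν : IsCenteredGaussian ν (S ∘L S.adjoint)) :
    Set.range S ⊆ cameronMartinSpace ν := by
  rintro _ ⟨w, rfl⟩
  refine mem_cameronMartinSpace.2 ⟨‖w‖, fun L ↦ ?_⟩
  obtain ⟨v, rfl⟩ := (InnerProductSpace.toDual ℝ H).surjective L
  calc
    |⟪v, S w⟫_ℝ| = |⟪w, S.adjoint v⟫_ℝ| := by rw [S.adjoint_inner_right, real_inner_comm]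
    _ ≤ ‖w‖ * ‖S.adjoint v‖ := abs_real_inner_le_norm _ _
    _ = ‖w‖ * √Var[InnerProductSpace.toDual ℝ H v; ν] :=
      congrArg (‖w‖ * ·) (hν.sqrt_variance_inner v).symm

theorem ae_mem_cameronMartinSpace {μ : Measure H} [IsProbabilityMeasure μ]
    (hν : IsCenteredGaussian ν (S ∘L S.adjoint)) (hμ : μ (Set.range S) = 1) :
    ∀ᵐ h ∂μ, h ∈ cameronMartinSpace ν :=
  (mem_ae_iff_prob_eq_one measurableSet_cameronMartinSpace).2 <|
    le_antisymm prob_le_one (hμ ▸ measure_mono hν.range_subset_cameronMartinSpace)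

end IsCenteredGaussian

/-- **Theorem (Equivalence of the noised measure with the Gaussian).**
If `ν = N(0,C)` with `C` self-adjoint, positive, trace-class, and `μ` is a probability measure
with full mass on the Cameron–Martin space `C^{1/2}(H)`, then `ν * μ ∼ ν`. -/
theorem stmt_0 {H : Type*} [NormedAddCommGroup H] [InnerProductSpace ℝ H]
    [CompleteSpace H] [TopologicalSpace.SeparableSpace H]
    [MeasurableSpace H] [BorelSpace H]
    (C sqrtC : H →L[ℝ] H)
    (hsa : ∀ x y : H, ⟪C x, y⟫_ℝ = ⟪x, C y⟫_ℝ)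
    (hpos : ∀ x : H, x ≠ 0 → 0 < ⟪C x, x⟫_ℝ)
    (htc : IsTraceClass C)
    (hsqrt_sa : ∀ x y : H, ⟪sqrtC x, y⟫_ℝ = ⟪x, sqrtC y⟫_ℝ)
    (hsqrt_nonneg : ∀ x : H, 0 ≤ ⟪sqrtC x, x⟫_ℝ)
    (hsqrt : sqrtC ∘L sqrtC = C)
    (ν μ : Measure H) [IsProbabilityMeasure μ]
    (hν : IsCenteredGaussian ν C)
    (hμ : μ (Set.range sqrtC) = 1) :
    (ν ∗ μ) ≪ ν ∧ ν ≪ (ν ∗ μ) := by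
  have : SecondCountableTopology H := UniformSpace.secondCountable_of_separable H
  have hadj : sqrtC.adjoint = sqrtC := ((ContinuousLinearMap.eq_adjoint_iff _ _).2 hsqrt_sa).symm
  have hν' : IsCenteredGaussian ν (sqrtC ∘L sqrtC.adjoint) := by rwa [hadj, hsqrt]
  have := hν.isGaussian
  exact stmt_0_general (hν'.ae_mem_cameronMartinSpace hμ)
end

section
/- Let μ₀ = N(0,C) be a Gaussian measure on a separable Hilbert space H with C self-adjoint, positive, trace-class, and let μ satisfy μ(C^{1/2}(H)) = 1. Fix 0 < β₁ ≤ ... ≤ β_T < 1 and set α_t = Π_{s=1}^t (1−β_s). Define u_t = √α_t u₀ + √(1−α_t) η with u₀ ∼ μ and η ∼ N(0,C) independent. Then the law ν_t of u_t is equivalent to the Gaussian measure N(0, (1−α_t)C) for every t ≥ 1. -/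
open MeasureTheory ProbabilityTheory
open scoped ENNReal InnerProductSpace MeasureTheory

/-- The DDPM cumulative product `α_t = Π_{s=1}^t (1 − β_s)`. -/
noncomputable def alphaProd (β : ℕ → ℝ) (t : ℕ) : ℝ :=
  ∏ s ∈ Finset.Icc 1 t, (1 - β s)

/-!
A shift of the centered Gaussian measure `ρ` with covariance `S S†` by a vector `S S† v` has density
`exp (⟪v, x⟫ - ‖S† v‖² / 2)` with respect to `ρ`: both sides have the same exponential moments. The
square of this density has integral `exp ‖S† v‖²`, so by Cauchy–Schwarz the shifted measure of a set
`A` is at most `exp (‖S† v‖² / 2) * ρ A ^ (1 / 2)`. The constant depends on `k = S† v` alone, so for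
open sets Fatou's lemma carries the estimate over to the shift by `S k` for every `k` in the closure
of the range of `S†`, and these shifts exhaust the range of `S`. Outer regularity then shows that
`ρ` is quasi-invariant under the range of `S`, and a convolution `μ ∗ ρ` is an average of shifts
of `ρ`.
-/

section Measure

open Filter Real Topology

variable {α : Type*} [MeasurableSpace α]

lemma withDensity_apply_le_Lp_mul_measure (μ : Measure α) {p q : ℝ} (hpq : p.HolderConjugate q)
    {f : α → ℝ≥0∞} (hf : AEMeasurable f μ) {s : Set α} (hs : MeasurableSet s) :
    μ.withDensity f s ≤ (∫⁻ x, f x ^ p ∂μ) ^ (1 / p) * μ s ^ (1 / q) := by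
  have hp : 0 ≤ 1 / p := one_div_nonneg.2 hpq.nonneg
  calc μ.withDensity f s = ∫⁻ x in s, (f * 1) x ∂μ := by rw [withDensity_apply f hs, mul_one]
    _ ≤ (∫⁻ x in s, f x ^ p ∂μ) ^ (1 / p) * (∫⁻ x in s, (1 : α → ℝ≥0∞) x ^ q ∂μ) ^ (1 / q) :=
      ENNReal.lintegral_mul_le_Lp_mul_Lq _ hpq hf.restrict aemeasurable_one
    _ ≤ (∫⁻ x, f x ^ p ∂μ) ^ (1 / p) * μ s ^ (1 / q) := by
      simp only [Pi.one_apply, ENNReal.one_rpow, setLIntegral_one]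
      gcongr
      exact Measure.restrict_le_self

/-- Fatou's lemma for indicators of open sets. -/
lemma lowerSemicontinuous_measure_preimage {X Y : Type*} [TopologicalSpace X]
    [FirstCountableTopology X] [TopologicalSpace Y] (μ : Measure α) {f : X → α → Y}
    (hf : ∀ a, Continuous fun x => f x a) {U : Set Y} (hU : IsOpen U)
    (hfU : ∀ x, MeasurableSet (f x ⁻¹' U)) :
    LowerSemicontinuous fun x => μ (f x ⁻¹' U) := by
  refine lowerSemicontinuous_iff_le_liminf.2 fun x => ?_
  have hind : ∀ a, LowerSemicontinuous fun x' => (f x' ⁻¹' U).indicator (1 : α → ℝ≥0∞) a :=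
    fun a => (hU.lowerSemicontinuous_indicator zero_le_one).comp (hf a)
  calc μ (f x ⁻¹' U)
      = ∫⁻ a, (f x ⁻¹' U).indicator 1 a ∂μ := (lintegral_indicator_one (hfU x)).symm
    _ ≤ ∫⁻ a, liminf (fun x' => (f x' ⁻¹' U).indicator 1 a) (𝓝 x) ∂μ :=
      lintegral_mono fun a => (hind a).le_liminf x
    _ ≤ liminf (fun x' => ∫⁻ a, (f x' ⁻¹' U).indicator 1 a ∂μ) (𝓝 x) :=
      lintegral_liminf_le fun x' => measurable_one.indicator (hfU x')
    _ = liminf (fun x' => μ (f x' ⁻¹' U)) (𝓝 x) := by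
      simp only [lintegral_indicator_one (hfU _)]

lemma absolutelyContinuous_of_forall_isOpen [TopologicalSpace α] {μ ν : Measure α}
    [ν.OuterRegular] {φ : ℝ≥0∞ → ℝ≥0∞} (hφ : Tendsto φ (𝓝 0) (𝓝 0))
    (h : ∀ U, IsOpen U → μ U ≤ φ (ν U)) : μ ≪ ν := by
  intro s hs
  refine nonpos_iff_eq_zero.1 (le_of_forall_gt fun ε hε => ?_)
  obtain ⟨δ, hδ, hφδ⟩ := ENNReal.nhds_zero_basis.eventually_iff.1 (hφ.eventually_lt_const hε)
  obtain ⟨U, hsU, hU, hνU⟩ := s.exists_isOpen_lt_of_lt δ (hs.trans_lt hδ)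
  calc μ s ≤ μ U := measure_mono hsU
    _ ≤ φ (ν U) := h U hU
    _ < ε := hφδ hνU

lemma ext_of_integral_exp_inner {H : Type*} [NormedAddCommGroup H]
    [InnerProductSpace ℝ H] [CompleteSpace H] [SecondCountableTopology H] [MeasurableSpace H]
    [BorelSpace H] {P Q : Measure H} [IsProbabilityMeasure P] [IsFiniteMeasure Q]
    (hint : ∀ t : H, Integrable (fun x => exp ⟪t, x⟫_ℝ) P)
    (h : ∀ t : H, ∫ x, exp ⟪t, x⟫_ℝ ∂P = ∫ x, exp ⟪t, x⟫_ℝ ∂Q) : P = Q := by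
  refine Measure.ext_of_charFun (funext fun t => ?_)
  have hmgf : mgf (fun x => ⟪x, t⟫_ℝ) P = mgf (fun x => ⟪x, t⟫_ℝ) Q := by
    ext r
    simpa [mgf, inner_smul_left, real_inner_comm] using h (r • t)
  have hset : integrableExpSet (fun x => ⟪x, t⟫_ℝ) P = Set.univ := by
    ext r
    simpa [integrableExpSet, inner_smul_left, real_inner_comm] using hint (r • t)
  have hI := eqOn_complexMGF_of_mgf hmgf (x := Complex.I) (by simp [hset])
  simpa [complexMGF, charFun_apply, mul_comm] using hI

end Measure

section Convolution

variable {M : Type*} [AddMonoid M] [MeasurableSpace M] [MeasurableAdd₂ M]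
  {μ ν ρ : Measure M} [SFinite ν]

lemma conv_apply {s : Set M} (hs : MeasurableSet s) :
    (μ ∗ ν) s = ∫⁻ x, ν.map (x + ·) s ∂μ := by
  rw [Measure.conv, Measure.map_apply measurable_add hs, Measure.prod_apply (measurable_add hs)]
  exact lintegral_congr fun x => (Measure.map_apply (measurable_const_add x) hs).symm

lemma conv_absolutelyContinuous_of_ae (h : ∀ᵐ x ∂μ, ν.map (x + ·) ≪ ρ) : μ ∗ ν ≪ ρ := by
  refine Measure.AbsolutelyContinuous.mk fun s hs hρs => ?_
  rw [conv_apply hs]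
  exact lintegral_eq_zero_of_ae_eq_zero (h.mono fun x hx => hx hρs)

lemma absolutelyContinuous_conv_of_ae [NeZero μ] (h : ∀ᵐ x ∂μ, ρ ≪ ν.map (x + ·)) :
    ρ ≪ μ ∗ ν := by
  refine Measure.AbsolutelyContinuous.mk fun s hs hconv => ?_
  have hmeas : Measurable fun x => ν.map (x + ·) s := by
    simp only [Measure.map_apply (measurable_const_add _) hs]
    exact measurable_measure_prodMk_left (measurable_add hs)
  rw [conv_apply hs, lintegral_eq_zero_iff hmeas] at hconv
  obtain ⟨x, hx, hxs⟩ := (h.and hconv).exists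
  exact hx hxs

end Convolution

section HilbertSpace

open Real
open scoped InnerProduct

variable {H K : Type*} [NormedAddCommGroup H] [InnerProductSpace ℝ H]
  [NormedAddCommGroup K] [InnerProductSpace ℝ K]

lemma injOn_orthogonal_ker (S : K →L[ℝ] H) : Set.InjOn S S.kerᗮ :=
  LinearMap.injOn_of_disjoint_ker subset_rfl S.ker.orthogonal_disjoint.symm

variable [CompleteSpace K]

lemma image_orthogonal_ker (S : K →L[ℝ] H) : S '' S.kerᗮ = Set.range S := by
  refine (Set.image_subset_range S _).antisymm ?_
  rintro _ ⟨k, rfl⟩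
  obtain ⟨y, hy, z, hz, rfl⟩ := S.ker.exists_add_mem_mem_orthogonal k
  have hSy : S y = 0 := hy
  exact ⟨z, hz, by simp [hSy]⟩

lemma measurableSet_range_continuousLinearMap [SecondCountableTopology K] [MeasurableSpace H]
    [OpensMeasurableSpace H] (S : K →L[ℝ] H) : MeasurableSet (Set.range S) := by
  rw [← image_orthogonal_ker]
  exact S.ker.isClosed_orthogonal.measurableSet_image_of_continuousOn_injOn
    S.continuous.continuousOn (injOn_orthogonal_ker S)

variable [MeasurableSpace H]

namespace IsCenteredGaussian

variable {ρ ν : Measure H} {C : H →L[ℝ] H} {S : K →L[ℝ] H}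

lemma map_smul [BorelSpace H] (hρ : IsCenteredGaussian ρ C) (c : ℝ) :
    IsCenteredGaussian (ρ.map (c • ·)) (c ^ 2 • C) := by
  have := hρ.1
  refine ⟨Measure.isProbabilityMeasure_map (by fun_prop), fun v => ?_⟩
  have hinner : (fun x => ⟪v, x⟫_ℝ) ∘ (c • ·) = fun x => ⟪c • v, x⟫_ℝ := by
    ext x
    simp [inner_smul_left, inner_smul_right]
  have hvar : ⟪C (c • v), c • v⟫_ℝ = ⟪(c ^ 2 • C) v, v⟫_ℝ := by
    simp only [_root_.map_smul, real_inner_smul_left, real_inner_smul_right, smul_apply]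
    ring
  rw [Measure.map_map (by fun_prop) (by fun_prop), hinner, hρ.2, hvar]

variable [CompleteSpace H]

lemma integral_exp_inner (hρ : IsCenteredGaussian ρ (S ∘L S†)) (v : H) :
    ∫ x, exp ⟪v, x⟫_ℝ ∂ρ = exp (‖(S†) v‖ ^ 2 / 2) := by
  have hvar : ⟪(S ∘L S†) v, v⟫_ℝ = ‖(S†) v‖ ^ 2 := by
    rw [ContinuousLinearMap.comp_apply, ← ContinuousLinearMap.adjoint_inner_right,
      real_inner_self_eq_norm_sq]
  have hmgf := mgf_gaussianReal (hρ.2 v) 1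
  rw [hvar, coe_toNNReal _ (sq_nonneg _)] at hmgf
  simpa [mgf] using hmgf

lemma integrable_exp_inner (hρ : IsCenteredGaussian ρ (S ∘L S†)) (v : H) :
    Integrable (fun x => exp ⟪v, x⟫_ℝ) ρ :=
  .of_integral_ne_zero (by rw [hρ.integral_exp_inner]; exact (exp_pos _).ne')

lemma lintegral_tilted_density_sq (hρ : IsCenteredGaussian ρ (S ∘L S†)) (v : H) :
    ∫⁻ x, ENNReal.ofReal (exp ⟪v, x⟫_ℝ / ∫ y, exp ⟪v, y⟫_ℝ ∂ρ) ^ (2 : ℝ) ∂ρ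
      = ENNReal.ofReal (exp (‖(S†) v‖ ^ 2)) := by
  have hsq : ∀ x, ENNReal.ofReal (exp ⟪v, x⟫_ℝ / ∫ y, exp ⟪v, y⟫_ℝ ∂ρ) ^ (2 : ℝ)
      = ENNReal.ofReal (exp (-‖(S†) v‖ ^ 2) * exp ⟪(2 : ℝ) • v, x⟫_ℝ) := by
    intro x
    rw [hρ.integral_exp_inner, ENNReal.ofReal_rpow_of_nonneg (by positivity) zero_le_two,
      ← exp_sub, ← exp_mul, ← exp_add, real_inner_smul_left]
    ring_nf
  simp only [hsq]
  rw [← ofReal_integral_eq_lintegral_ofReal ((hρ.integrable_exp_inner _).const_mul _)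
    (ae_of_all _ fun x => by positivity), integral_const_mul, hρ.integral_exp_inner, ← exp_add,
    _root_.map_smul, norm_smul, norm_two]
  ring_nf

variable [BorelSpace H] [SecondCountableTopology H]

lemma unique (hρ : IsCenteredGaussian ρ C) (hν : IsCenteredGaussian ν C) : ρ = ν := by
  have := hρ.1
  have := hν.1
  refine Measure.ext_of_charFun (funext fun v => ?_)
  have hmap : ρ.map (InnerProductSpace.toDualMap ℝ H v)
      = ν.map (InnerProductSpace.toDualMap ℝ H v) := (hρ.2 v).trans (hν.2 v).symm
  rw [charFun_eq_charFunDual_toDualMap, charFun_eq_charFunDual_toDualMap,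
    charFunDual_eq_charFun_map_one, charFunDual_eq_charFun_map_one, hmap]

/-- The Cameron–Martin formula for shifts in the range of the covariance operator. -/
lemma map_add_eq_tilted (hρ : IsCenteredGaussian ρ (S ∘L S†)) (v : H) :
    ρ.map (S ((S†) v) + ·) = ρ.tilted fun x => ⟪v, x⟫_ℝ := by
  have := hρ.1
  have := isProbabilityMeasure_tilted (hρ.integrable_exp_inner v)
  have hmeas : Measurable (S ((S†) v) + · : H → H) := measurable_const_add _
  have := Measure.isProbabilityMeasure_map (μ := ρ) hmeas.aemeasurable
  have hexp : ∀ t x : H, exp ⟪t, S ((S†) v) + x⟫_ℝ = exp ⟪(S†) t, (S†) v⟫_ℝ * exp ⟪t, x⟫_ℝ := by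
    intro t x
    rw [inner_add_right, exp_add, ContinuousLinearMap.adjoint_inner_left]
  refine ext_of_integral_exp_inner (fun t => ?_) (fun t => ?_)
  · rw [integrable_map_measure (by fun_prop) hmeas.aemeasurable]
    simp only [Function.comp_def, hexp]
    exact (hρ.integrable_exp_inner t).const_mul _
  · calc ∫ x, exp ⟪t, x⟫_ℝ ∂ρ.map (S ((S†) v) + ·)
        = exp ⟪(S†) t, (S†) v⟫_ℝ * exp (‖(S†) t‖ ^ 2 / 2) := by
          rw [integral_map hmeas.aemeasurable (by fun_prop)]
          simp only [hexp, integral_const_mul, hρ.integral_exp_inner]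
      _ = exp (‖(S†) (v + t)‖ ^ 2 / 2) / exp (‖(S†) v‖ ^ 2 / 2) := by
          rw [← exp_add, ← exp_sub, map_add, norm_add_sq_real, real_inner_comm]
          ring_nf
      _ = ∫ x, exp ⟪t, x⟫_ℝ ∂ρ.tilted fun x => ⟪v, x⟫_ℝ := by
          rw [integral_exp_tilted]
          simp only [Pi.add_apply, ← inner_add_left, hρ.integral_exp_inner]

lemma map_add_apply_le (hρ : IsCenteredGaussian ρ (S ∘L S†)) (v : H) {s : Set H}
    (hs : MeasurableSet s) :
    ρ.map (S ((S†) v) + ·) s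
      ≤ ENNReal.ofReal (exp (‖(S†) v‖ ^ 2 / 2)) * ρ s ^ (1 / 2 : ℝ) := by
  rw [hρ.map_add_eq_tilted, Measure.tilted]
  refine (withDensity_apply_le_Lp_mul_measure ρ .two_two (by fun_prop) hs).trans_eq ?_
  rw [hρ.lintegral_tilted_density_sq, ENNReal.ofReal_rpow_of_nonneg (exp_pos _).le one_half_pos.le,
    ← exp_mul, mul_one_div]

/-- The left side is lower semicontinuous in `k` because `U` is open, so the estimate passes from
the range of `S†` to its closure. -/
lemma map_add_apply_le_of_isOpen (hρ : IsCenteredGaussian ρ (S ∘L S†)) {k : K}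
    (hk : k ∈ S.kerᗮ) {U : Set H} (hU : IsOpen U) :
    ρ.map (S k + ·) U ≤ ENNReal.ofReal (exp (‖k‖ ^ 2 / 2)) * ρ U ^ (1 / 2 : ℝ) := by
  have := hρ.1
  have hmap : ∀ k', ρ.map (S k' + ·) U = ρ ((S k' + ·) ⁻¹' U) := fun k' =>
    Measure.map_apply (measurable_const_add _) hU.measurableSet
  have hlsc : LowerSemicontinuous fun k' => ρ.map (S k' + ·) U := by
    simp only [hmap]
    exact lowerSemicontinuous_measure_preimage ρ (fun x => by fun_prop) hU
      fun k' => measurable_const_add _ hU.measurableSet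
  have hcont : Continuous fun k' : K =>
      ENNReal.ofReal (exp (‖k'‖ ^ 2 / 2)) * ρ U ^ (1 / 2 : ℝ) :=
    (ENNReal.continuous_mul_const
      (ENNReal.rpow_ne_top_of_nonneg one_half_pos.le (measure_ne_top ρ U))).comp
      (ENNReal.continuous_ofReal.comp (by fun_prop))
  have hclosed : IsClosed {k' | ρ.map (S k' + ·) U
      ≤ ENNReal.ofReal (exp (‖k'‖ ^ 2 / 2)) * ρ U ^ (1 / 2 : ℝ)} :=
    (lowerSemicontinuous_iff_isClosed_epigraph.1 hlsc).preimage (continuous_id.prodMk hcont)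
  rw [S.orthogonal_ker] at hk
  refine closure_minimal ?_ hclosed hk
  rintro _ ⟨v, rfl⟩
  exact hρ.map_add_apply_le v hU.measurableSet

lemma map_add_absolutelyContinuous (hρ : IsCenteredGaussian ρ (S ∘L S†)) {h : H}
    (hh : h ∈ Set.range S) : ρ.map (h + ·) ≪ ρ := by
  have := hρ.1
  rw [← image_orthogonal_ker] at hh
  obtain ⟨k, hk, rfl⟩ := hh
  have hcont : Continuous fun x : ℝ≥0∞ =>
      ENNReal.ofReal (exp (‖k‖ ^ 2 / 2)) * x ^ (1 / 2 : ℝ) :=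
    (ENNReal.continuous_const_mul ENNReal.ofReal_ne_top).comp ENNReal.continuous_rpow_const
  have hlim := hcont.tendsto 0
  rw [ENNReal.zero_rpow_of_pos one_half_pos, mul_zero] at hlim
  exact absolutelyContinuous_of_forall_isOpen hlim
    fun U hU => hρ.map_add_apply_le_of_isOpen hk hU

lemma absolutelyContinuous_map_add (hρ : IsCenteredGaussian ρ (S ∘L S†)) {h : H}
    (hh : h ∈ Set.range S) : ρ ≪ ρ.map (h + ·) := by
  have hneg : -h ∈ Set.range S := S.range.neg_mem hh
  have hmap := (hρ.map_add_absolutelyContinuous hneg).map (measurable_const_add h)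
  rwa [Measure.map_map (measurable_const_add _) (measurable_const_add _), Function.comp_def,
    funext (add_neg_cancel_left h), Measure.map_id'] at hmap

lemma conv_mutually_absolutelyContinuous {μ : Measure H} [NeZero μ]
    (hρ : IsCenteredGaussian ρ (S ∘L S†)) (hμ : ∀ᵐ u ∂μ, u ∈ Set.range S) :
    μ ∗ ρ ≪ ρ ∧ ρ ≪ μ ∗ ρ := by
  have := hρ.1
  exact ⟨conv_absolutelyContinuous_of_ae (hμ.mono fun u hu => hρ.map_add_absolutelyContinuous hu),
    absolutelyContinuous_conv_of_ae (hμ.mono fun u hu => hρ.absolutelyContinuous_map_add hu)⟩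

end IsCenteredGaussian

theorem stmt_15_general [SecondCountableTopology K] [CompleteSpace H] [SecondCountableTopology H]
    [BorelSpace H] {S : K →L[ℝ] H} {ν₀ μ ρ : Measure H} [IsProbabilityMeasure μ]
    (hν₀ : IsCenteredGaussian ν₀ (S ∘L S†)) (hμ : μ (Set.range S) = 1)
    (a : ℝ) {b : ℝ} (hb : b ≠ 0) (hρ : IsCenteredGaussian ρ (b ^ 2 • S ∘L S†)) :
    (μ.map (a • ·) ∗ ν₀.map (b • ·)) ≪ ρ ∧ ρ ≪ (μ.map (a • ·) ∗ ν₀.map (b • ·)) := by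
  rw [(hν₀.map_smul b).unique hρ]
  have := Measure.isProbabilityMeasure_map (μ := μ) (f := (a • · : H → H)) (by fun_prop)
  have hcov : b ^ 2 • S ∘L S† = (b • S) ∘L (b • S)† := by
    ext v
    simp [smul_smul, sq]
  have hμS : ∀ᵐ u ∂μ, u ∈ Set.range S :=
    (prob_compl_eq_zero_iff (measurableSet_range_continuousLinearMap S)).2 hμ
  have hmem : ∀ u ∈ Set.range S, a • u ∈ Set.range (b • S) := by
    rintro _ ⟨k, rfl⟩
    exact ⟨(a * b⁻¹) • k, by simp [smul_smul, inv_mul_cancel_right₀ hb]⟩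
  have haS : ∀ᵐ u ∂μ.map (a • ·), u ∈ Set.range (b • S) :=
    (ae_map_iff (measurable_const_smul a).aemeasurable
      (measurableSet_range_continuousLinearMap (b • S))).2 (hμS.mono hmem)
  exact (hcov ▸ hρ).conv_mutually_absolutelyContinuous haS

end HilbertSpace

lemma alphaProd_lt_one {β : ℕ → ℝ} {t : ℕ} (ht : 1 ≤ t)
    (hβ : ∀ s ∈ Finset.Icc 1 t, β s ∈ Set.Ioo 0 1) : alphaProd β t < 1 := by
  rw [← Finset.prod_const_one (s := Finset.Icc 1 t)]
  exact Finset.prod_lt_prod_of_nonempty (fun s hs => sub_pos.2 (hβ s hs).2)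
    (fun s hs => sub_lt_self 1 (hβ s hs).1) (Finset.nonempty_Icc.2 ht)

/-- **Lemma (DDPM forward process in infinite dimensions).**
Let `μ₀ = N(0,C)` with `C` self-adjoint, positive, trace-class, and `μ` a probability measure
with `μ(C^{1/2}(H)) = 1`. Fix `0 < β₁ ≤ ⋯ ≤ β_T < 1` and `α_t = Π_{s=1}^t (1−β_s)`. Then the
law `ν_t` of `u_t = √α_t u₀ + √(1−α_t) η` (`u₀ ∼ μ`, `η ∼ N(0,C)` independent) is equivalent
to the Gaussian `N(0, (1−α_t)C)`, for every `1 ≤ t ≤ T`. -/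
theorem stmt_15 {H : Type*} [NormedAddCommGroup H] [InnerProductSpace ℝ H]
    [CompleteSpace H] [TopologicalSpace.SeparableSpace H]
    [MeasurableSpace H] [BorelSpace H]
    (C sqrtC : H →L[ℝ] H)
    (hsa : ∀ x y : H, ⟪C x, y⟫_ℝ = ⟪x, C y⟫_ℝ)
    (hpos : ∀ x : H, x ≠ 0 → 0 < ⟪C x, x⟫_ℝ)
    (htc : IsTraceClass C)
    (hsqrt : sqrtC ∘L sqrtC = C)
    (hsqrt_sa : ∀ x y : H, ⟪sqrtC x, y⟫_ℝ = ⟪x, sqrtC y⟫_ℝ)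
    (hsqrt_nonneg : ∀ x : H, 0 ≤ ⟪sqrtC x, x⟫_ℝ)
    (ν₀ μ : Measure H) [IsProbabilityMeasure μ]
    (hν₀ : IsCenteredGaussian ν₀ C)
    (hμ : μ (Set.range sqrtC) = 1)
    (T : ℕ) (β : ℕ → ℝ)
    (hβ1 : 0 < β 1) (hβT : β T < 1)
    (hβmono : MonotoneOn β (Set.Icc 1 T)) :
    ∀ t : ℕ, 1 ≤ t → t ≤ T →
      ∀ ρ : Measure H, IsCenteredGaussian ρ ((1 - alphaProd β t) • C) →
        ((μ.map fun u => Real.sqrt (alphaProd β t) • u) ∗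
            (ν₀.map fun u => Real.sqrt (1 - alphaProd β t) • u)) ≪ ρ ∧
          ρ ≪ ((μ.map fun u => Real.sqrt (alphaProd β t) • u) ∗
            (ν₀.map fun u => Real.sqrt (1 - alphaProd β t) • u)) := by
  intro t ht htT ρ hρ
  have : SecondCountableTopology H := UniformSpace.secondCountable_of_separable H
  have hβ : ∀ s ∈ Finset.Icc 1 t, β s ∈ Set.Ioo 0 1 := fun s hs => by
    obtain ⟨h1s, hst⟩ := Finset.mem_Icc.1 hs
    exact Set.Icc_subset_Ioo hβ1 hβT (hβmono.mapsTo_Icc ⟨h1s, hst.trans htT⟩)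
  have hα : 0 < 1 - alphaProd β t := sub_pos.2 (alphaProd_lt_one ht hβ)
  have hC : sqrtC ∘L ContinuousLinearMap.adjoint sqrtC = C := by
    rwa [← (ContinuousLinearMap.eq_adjoint_iff sqrtC sqrtC).2 hsqrt_sa]
  rw [← hC] at hν₀ hρ
  rw [← Real.sq_sqrt hα.le] at hρ
  exact stmt_15_general hν₀ hμ _ (Real.sqrt_pos.2 hα).ne' hρ
end
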